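/- Suppose m ≥ 1 is an integer divisible by l(l−1). Then v_{2m − m/l}(I^{(m)}) = 1 and v_d(I^{(m)}) = 0 for every degree d < 2m − m/l; that is, I^{(m)} has exactly one minimal generator of the least degree 2m − m/l and none of smaller degree. -/

import Mathlib

open MvPolynomial Filter

/-- The degree-`d` homogeneous component of a homogeneous ideal `J ⊆ K[x,y,z]`,
as a `K`-vector subspace. -/
noncomputable def degComp {K : Type*} [Field K] (J : Ideal (MvPolynomial (Fin 3) K)) (d : ℕ) :
    Submodule K (MvPolynomial (Fin 3) K) :=
  Submodule.restrictScalars K J ⊓ homogeneousSubmodule (Fin 3) K d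

/-- `dim_K J_d`. -/
noncomputable def hdim {K : Type*} [Field K] (J : Ideal (MvPolynomial (Fin 3) K)) (d : ℕ) : ℕ :=
  Module.finrank K (degComp J d)

/-- The subspace `R_1 · J_{d-1}` of products of linear forms with degree-`(d-1)` elements. -/
noncomputable def oneGen {K : Type*} [Field K] (J : Ideal (MvPolynomial (Fin 3) K)) (d : ℕ) :
    Submodule K (MvPolynomial (Fin 3) K) :=
  Submodule.span K
    {x | ∃ f ∈ homogeneousSubmodule (Fin 3) K 1, ∃ g ∈ degComp J (d - 1), x = f * g}

/-- `v_d(J) = dim_K J_d / (R_1 · J_{d-1})`, the number of minimal generators of `J`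
in degree `d`. -/
noncomputable def vnum {K : Type*} [Field K] (J : Ideal (MvPolynomial (Fin 3) K)) (d : ℕ) : ℕ :=
  Module.finrank K
    (↥(degComp J d) ⧸ Submodule.comap (degComp J d).subtype (oneGen J d))

/-!
In coordinates where the isolated point is `q = (1, 0, 0)` and the line is `X 0 = 0`, expand a form
of degree `d` as `F = ∑ k, f k * X 0 ^ k` with `f k` a binary form of degree `d - k`. Multiplicity
`m` at `q` gives `m ≤ d - k` whenever `f k ≠ 0`. Multiplicity `m` at the collinear points makes
`f k` divisible by the `(m - k)`-th power of the product of their `l` linear forms, so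
`l * (m - k) ≤ d - k`. For `m = l * s` these bounds exclude `d < 2 * m - s`, and for
`d = 2 * m - s` they force `k = m - s`, so that `f k` is a constant multiple of the `s`-th power of
that product. Hence the component of degree `2 * m - s` is spanned by a single form: the product of
`L ^ (m - s)` and the `s`-th powers of the lines joining `q` to the other points.
-/

section MinimalGenerators

variable {K : Type*} [Field K] {J : Ideal (MvPolynomial (Fin 3) K)} {d : ℕ}

lemma vnum_eq_zero_of_degComp_eq_bot (h : degComp J d = ⊥) : vnum J d = 0 := by
  have : Subsingleton (degComp J d) := Submodule.subsingleton_iff_eq_bot.mpr h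
  have := (Submodule.mkQ_surjective
    ((oneGen J d).comap (degComp J d).subtype)).subsingleton
  exact Module.finrank_zero_of_subsingleton

lemma oneGen_eq_bot_of_degComp_pred_eq_bot (h : degComp J (d - 1) = ⊥) : oneGen J d = ⊥ := by
  refine Submodule.span_eq_bot.mpr ?_
  rintro _ ⟨f, _, g, hg, rfl⟩
  rw [h, Submodule.mem_bot] at hg
  rw [hg, mul_zero]

lemma vnum_eq_finrank_degComp (h : degComp J (d - 1) = ⊥) :
    vnum J d = Module.finrank K (degComp J d) := by
  refine (Submodule.quotEquivOfEqBot _ ?_).finrank_eq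
  rw [oneGen_eq_bot_of_degComp_pred_eq_bot h, Submodule.comap_bot, Submodule.ker_subtype]

end MinimalGenerators

section LinearForms

variable {σ R K : Type*} [Fintype σ] [CommRing R] [Field K]

/-- The linear form `∑ i, c i • X i` with coefficient vector `c`. -/
noncomputable def linearForm : (σ → R) →ₗ[R] MvPolynomial σ R :=
  Fintype.linearCombination R X

lemma linearForm_injective : Function.Injective (linearForm : (σ → R) →ₗ[R] _) :=
  (linearIndependent_X σ R).fintypeLinearCombination_injective

lemma isHomogeneous_linearForm (c : σ → R) : (linearForm c).IsHomogeneous 1 :=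
  (homogeneousSubmodule σ R 1).sum_mem fun i _ ↦ Submodule.smul_mem _ _ (isHomogeneous_X R i)

lemma isHomogeneous_prod_linearForm {ι : Type*} [Fintype ι] (c : ι → σ → R) :
    (∏ i, linearForm (c i)).IsHomogeneous (Fintype.card ι) := by
  simpa using IsHomogeneous.prod Finset.univ (fun i ↦ linearForm (c i)) (fun _ ↦ 1)
    fun i _ ↦ isHomogeneous_linearForm (c i)

lemma linearForm_ne_zero {c : σ → R} (hc : c ≠ 0) : linearForm c ≠ 0 :=
  (map_ne_zero_iff _ linearForm_injective).mpr hc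

variable {a b : σ → K}

lemma irreducible_linearForm (ha : a ≠ 0) : Irreducible (linearForm a) := by
  refine irreducible_of_totalDegree_eq_one
    ((isHomogeneous_linearForm a).totalDegree (linearForm_ne_zero ha)) fun x hx ↦ ?_
  have hx0 : x ≠ 0 := by
    rintro rfl
    exact linearForm_ne_zero ha (by ext s; simpa using hx s)
  exact hx0.isUnit

lemma isRelPrime_linearForm (h : LinearIndependent K ![a, b]) :
    IsRelPrime (linearForm a) (linearForm b) := by
  have ha : a ≠ 0 := h.ne_zero 0
  have hb : b ≠ 0 := h.ne_zero 1
  rw [(irreducible_linearForm ha).isRelPrime_iff_not_dvd]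
  intro hdvd
  obtain ⟨w, hw⟩ := (irreducible_linearForm ha).associated_of_dvd (irreducible_linearForm hb) hdvd
  obtain ⟨c, -, hc⟩ := isUnit_iff_eq_C_of_isReduced.mp w.isUnit
  refine (LinearIndependent.pair_iff' ha).mp h c (linearForm_injective ?_)
  rw [map_smul, ← hw, hc, smul_eq_C_mul, mul_comm]

end LinearForms

section PointIdeals

variable {σ R : Type*} [CommRing R]

/-- The restriction of polynomials to the line through the origin spanned by `p`: it sends
`F` to the univariate polynomial `F (t • p)` in `t`. -/
noncomputable def restrictToLine (p : σ → R) : MvPolynomial σ R →ₐ[R] Polynomial R :=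
  aeval fun i ↦ Polynomial.C (p i) * Polynomial.X

lemma restrictToLine_monomial (p : σ → R) (s : σ →₀ ℕ) (a : R) :
    restrictToLine p (monomial s a) = Polynomial.monomial s.degree (eval p (monomial s a)) := by
  simp [restrictToLine, aeval_monomial, eval_monomial, mul_pow, Finsupp.prod,
    ← Polynomial.C_mul_X_pow_eq_monomial, Finset.prod_mul_distrib, Finset.prod_pow_eq_pow_sum,
    Finsupp.degree_apply, mul_assoc]

lemma coeff_restrictToLine (p : σ → R) (F : MvPolynomial σ R) (n : ℕ) :
    (restrictToLine p F).coeff n = eval p (homogeneousComponent n F) := by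
  induction F using MvPolynomial.induction_on' with
  | monomial s a =>
    rw [restrictToLine_monomial, Polynomial.coeff_monomial,
      homogeneousComponent_of_mem (isHomogeneous_monomial a rfl)]
    simp only [eq_comm (a := n), apply_ite (eval p), map_zero]
  | add F G hF hG => simp only [map_add, Polynomial.coeff_add, hF, hG]

/-- The homogeneous prime ideal of the point of projective space with coordinate vector `p`.
A polynomial is a combination of forms vanishing at `p` exactly when it vanishes on the line
spanned by `p`, whence the encoding as a kernel. -/
noncomputable def pointIdeal (p : σ → R) : Ideal (MvPolynomial σ R) :=
  RingHom.ker (restrictToLine p)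

lemma mem_pointIdeal_iff {p : σ → R} {F : MvPolynomial σ R} :
    F ∈ pointIdeal p ↔ ∀ n, eval p (homogeneousComponent n F) = 0 := by
  simp_rw [← coeff_restrictToLine, pointIdeal, RingHom.mem_ker, Polynomial.ext_iff,
    Polynomial.coeff_zero]

/-- The ideal `⋂ i, (pointIdeal (p i)) ^ m` of the uniform fat point scheme of multiplicity `m`
supported at the points `p i`. -/
noncomputable def fatPointIdeal {ι : Type*} (p : ι → σ → R) (m : ℕ) : Ideal (MvPolynomial σ R) :=
  ⨅ i, pointIdeal (p i) ^ m

variable [Fintype σ]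

lemma restrictToLine_linearForm (p c : σ → R) :
    restrictToLine p (linearForm c) = Polynomial.C (c ⬝ᵥ p) * Polynomial.X := by
  simp [linearForm, Fintype.linearCombination_apply, restrictToLine, dotProduct, Finset.sum_mul,
    Polynomial.smul_eq_C_mul, mul_assoc]

lemma linearForm_mem_pointIdeal {p c : σ → R} (h : c ⬝ᵥ p = 0) : linearForm c ∈ pointIdeal p := by
  rw [pointIdeal, RingHom.mem_ker, restrictToLine_linearForm, h, map_zero, zero_mul]

variable {K : Type*} [Field K]

-- Modulo `I`, every variable `X i` is congruent to `p i • w` for a linear form `w` with value `1`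
-- at `p`, so a polynomial is determined modulo `I` by its restriction to the line spanned by `p`.
lemma pointIdeal_le_of_linearForm_mem {p : σ → K} (hp : p ≠ 0) {I : Ideal (MvPolynomial σ K)}
    (hI : ∀ c, c ⬝ᵥ p = 0 → linearForm c ∈ I) : pointIdeal p ≤ I := by
  classical
  obtain ⟨i, hi⟩ := Function.ne_iff.mp hp
  let e : σ → K := Pi.single i (p i)⁻¹
  have he : e ⬝ᵥ p = 1 := by simpa [e] using inv_mul_cancel₀ hi
  have hX (j : σ) : linearForm (Pi.single j 1) = (X j : MvPolynomial σ K) := by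
    simp [linearForm]
  have hquot : Ideal.Quotient.mkₐ K I =
      (Polynomial.aeval (Ideal.Quotient.mk I (linearForm e))).comp (restrictToLine p) := by
    refine algHom_ext fun j ↦ ?_
    have hmem : linearForm (Pi.single j 1 - p j • e) ∈ I := hI _ (by simp [sub_dotProduct, he])
    rw [map_sub, map_smul, hX, ← Ideal.Quotient.eq] at hmem
    simpa [restrictToLine, Algebra.smul_def, ← Ideal.Quotient.mk_algebraMap, algebraMap_eq]
      using hmem
  intro F hF
  rw [← Ideal.Quotient.eq_zero_iff_mem, ← Ideal.Quotient.mkₐ_eq_mk K, hquot, AlgHom.comp_apply,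
    RingHom.mem_ker.mp hF, map_zero]

end PointIdeals

section ChangeOfVariables

open scoped Matrix

variable {σ R : Type*} [Fintype σ] [CommRing R]

lemma toMvPolynomial_eq_linearForm (M : Matrix σ σ R) (i : σ) :
    M.toMvPolynomial i = linearForm (M i) := by
  simp [Matrix.toMvPolynomial, linearForm, Fintype.linearCombination_apply, smul_eq_C_mul,
    C_mul_X_eq_monomial]

variable [DecidableEq σ]

/-- The linear change of variables sending `F` to the polynomial `F (M *ᵥ x)` in `x`. -/
noncomputable def changeOfVariables (M : GL σ R) : MvPolynomial σ R ≃ₐ[R] MvPolynomial σ R :=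
  AlgEquiv.ofAlgHom (bind₁ M.1.toMvPolynomial) (bind₁ M⁻¹.1.toMvPolynomial)
    (algHom_ext fun i ↦ by simp [← Matrix.toMvPolynomial_mul])
    (algHom_ext fun i ↦ by simp [← Matrix.toMvPolynomial_mul])

lemma isHomogeneous_changeOfVariables (M : GL σ R) {F : MvPolynomial σ R} {d : ℕ}
    (hF : F.IsHomogeneous d) : (changeOfVariables M F).IsHomogeneous d := by
  have h := hF.aeval _ (Matrix.toMvPolynomial_isHomogeneous M.1)
  rwa [one_mul] at h

lemma restrictToLine_changeOfVariables (M : GL σ R) (x : σ → R) (F : MvPolynomial σ R) :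
    restrictToLine x (changeOfVariables M F) = restrictToLine (M.1 *ᵥ x) F := by
  suffices (restrictToLine x).comp (changeOfVariables M).toAlgHom = restrictToLine (M.1 *ᵥ x) from
    DFunLike.congr_fun this F
  refine algHom_ext fun i ↦ ?_
  have hX : changeOfVariables M (X i) = linearForm (M.1 i) := by
    simp [changeOfVariables, toMvPolynomial_eq_linearForm]
  change restrictToLine x (changeOfVariables M (X i)) = _
  rw [hX, restrictToLine_linearForm, restrictToLine, aeval_X, Matrix.mulVec]

lemma changeOfVariables_mem_pointIdeal_pow (M : GL σ R) {x : σ → R} {F : MvPolynomial σ R} {m : ℕ}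
    (hF : F ∈ pointIdeal (M.1 *ᵥ x) ^ m) : changeOfVariables M F ∈ pointIdeal x ^ m := by
  have hle : pointIdeal (M.1 *ᵥ x) ≤ (pointIdeal x).comap (changeOfVariables M) := fun G hG ↦ by
    rwa [Ideal.mem_comap, pointIdeal, RingHom.mem_ker, restrictToLine_changeOfVariables]
  exact Ideal.le_comap_pow _ m (Ideal.pow_right_mono hle m hF)

end ChangeOfVariables

section AdaptedCoordinates

open scoped Matrix

variable {K : Type*} [Field K] {n : ℕ} {L q : Fin (n + 1) → K}

lemma exists_basis_zero_eq_of_dotProduct_ne_zero (h : L ⬝ᵥ q ≠ 0) :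
    ∃ b : Module.Basis (Fin (n + 1)) K (Fin (n + 1) → K),
      b 0 = q ∧ ∀ i : Fin n, L ⬝ᵥ b i.succ = 0 := by
  let f : Module.Dual K (Fin (n + 1) → K) := dotProductBilin K K L
  have hf : f ≠ 0 := fun hf ↦ h (by simpa [f] using DFunLike.congr_fun hf q)
  have hrank : Module.finrank K (LinearMap.ker f) = n := by
    simpa using Module.Dual.finrank_ker_add_one_of_ne_zero hf
  let c := Module.finBasisOfFinrankEq K (LinearMap.ker f) hrank
  have hli (a : K) (x) (hx : x ∈ LinearMap.ker f) (hax : a • q + x = 0) : a = 0 := by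
    have hfx : L ⬝ᵥ x = 0 := hx
    have := congrArg (L ⬝ᵥ ·) hax
    simpa [dotProduct_add, hfx, h] using this
  have hspan (z : Fin (n + 1) → K) : ∃ a : K, z + a • q ∈ LinearMap.ker f := by
    refine ⟨-(L ⬝ᵥ z / L ⬝ᵥ q), ?_⟩
    simp [f, dotProduct_add, h]
  refine ⟨Module.Basis.mkFinCons q c hli hspan, ?_, fun i ↦ ?_⟩
  · simp
  · have hci : L ⬝ᵥ (c i : Fin (n + 1) → K) = 0 := (c i).2
    simpa using hci

lemma exists_GL_mulVec_vecCons_eq (h : L ⬝ᵥ q ≠ 0) : ∃ M : GL (Fin (n + 1)) K,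
    M.1 *ᵥ Matrix.vecCons 1 0 = q ∧
      ∀ x, L ⬝ᵥ x = 0 → ∃ y : Fin n → K, M.1 *ᵥ Matrix.vecCons 0 y = x := by
  obtain ⟨b, hbq, hbL⟩ := exists_basis_zero_eq_of_dotProduct_ne_zero h
  let e := Pi.basisFun K (Fin (n + 1))
  let M : GL (Fin (n + 1)) K := ⟨e.toMatrix b, b.toMatrix e,
    e.toMatrix_mul_toMatrix_flip b, b.toMatrix_mul_toMatrix_flip e⟩
  have hM (x : Fin (n + 1) → K) : M.1 *ᵥ b.repr x = x :=
    (b.toMatrix_mulVec_repr e x).trans (funext fun _ ↦ Pi.basisFun_repr ..)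
  refine ⟨M, ?_, fun x hx ↦ ⟨Matrix.vecTail (b.repr x), ?_⟩⟩
  · have hq := hM q
    have hrepr : ⇑(b.repr q) = Matrix.vecCons 1 0 := by
      rw [← hbq, b.repr_self]
      exact funext (Fin.cases (by simp) (by simp))
    rwa [hrepr] at hq
  · have hx0 : b.repr x 0 = 0 := by
      rw [← b.sum_repr x, Fin.sum_univ_succ, dotProduct_add, dotProduct_sum] at hx
      simpa [hbL, hbq, h] using hx
    have hrepr : ⇑(b.repr x) = Matrix.vecCons 0 (Matrix.vecTail (b.repr x)) := by
      rw [← hx0]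
      exact (Matrix.cons_head_tail _).symm
    rw [← hrepr, hM]

end AdaptedCoordinates

section Expansion

variable {R : Type*} [CommRing R] {n : ℕ}

lemma coeff_mem_pow_sub_of_mem_comap_constantCoeff_pow {J : Ideal R} {f : Polynomial R} {m : ℕ}
    (hf : f ∈ J.comap Polynomial.constantCoeff ^ m) (k : ℕ) : f.coeff k ∈ J ^ (m - k) := by
  induction m generalizing f k with
  | zero => simp
  | succ m ih =>
    rw [pow_succ] at hf
    induction hf using Submodule.mul_induction_on' with
    | mem_mul_mem f hf g hg =>
      rw [Polynomial.coeff_mul]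
      refine Ideal.sum_mem _ fun ⟨i, j⟩ hij ↦ ?_
      rw [Finset.HasAntidiagonal.mem_antidiagonal] at hij
      obtain rfl | hj := Nat.eq_zero_or_pos j
      · have h := Ideal.mul_mem_mul (ih hf i) (Ideal.mem_comap.mp hg)
        exact Ideal.pow_le_pow_right (by lia) (pow_succ (M := Ideal R) _ _ ▸ h)
      · exact Ideal.mul_mem_right _ _ (Ideal.pow_le_pow_right (by lia) (ih hf i))
    | add f _ g _ hf hg => rw [Polynomial.coeff_add]; exact add_mem hf hg

lemma restrictToLine_coeff_zero_finSuccEquiv (y : Fin n → R) (F : MvPolynomial (Fin (n + 1)) R) :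
    restrictToLine y ((finSuccEquiv R n F).coeff 0) = restrictToLine (Matrix.vecCons 0 y) F := by
  suffices (restrictToLine y).toRingHom.comp
      (Polynomial.constantCoeff.comp (finSuccEquiv R n).toRingEquiv.toRingHom) =
      (restrictToLine (Matrix.vecCons 0 y)).toRingHom from DFunLike.congr_fun this F
  refine ringHom_ext (fun r ↦ ?_) (Fin.cases ?_ fun i ↦ ?_)
  · simp [finSuccEquiv_apply]
  · simp [restrictToLine, finSuccEquiv_X_zero]
  · simp [restrictToLine, finSuccEquiv_X_succ]

lemma coeff_finSuccEquiv_mem_pointIdeal_pow {y : Fin n → R} {F : MvPolynomial (Fin (n + 1)) R}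
    {m : ℕ} (hF : F ∈ pointIdeal (Matrix.vecCons 0 y) ^ m) (k : ℕ) :
    (finSuccEquiv R n F).coeff k ∈ pointIdeal y ^ (m - k) := by
  have hle : pointIdeal (Matrix.vecCons 0 y) ≤
      ((pointIdeal y).comap Polynomial.constantCoeff).comap (finSuccEquiv R n) := fun G hG ↦ by
    simpa [pointIdeal, restrictToLine_coeff_zero_finSuccEquiv] using hG
  exact coeff_mem_pow_sub_of_mem_comap_constantCoeff_pow
    (Ideal.le_comap_pow _ m (Ideal.pow_right_mono hle m hF)) k

lemma map_constantCoeff_finSuccEquiv (F : MvPolynomial (Fin (n + 1)) R) :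
    (finSuccEquiv R n F).map constantCoeff = restrictToLine (Matrix.vecCons 1 0) F := by
  suffices (Polynomial.mapRingHom constantCoeff).comp
      (finSuccEquiv R n).toRingEquiv.toRingHom =
      (restrictToLine (Matrix.vecCons 1 0)).toRingHom from DFunLike.congr_fun this F
  refine ringHom_ext (fun r ↦ ?_) (Fin.cases ?_ fun i ↦ ?_)
  · simp [finSuccEquiv_apply, Polynomial.algebraMap_eq]
  · simp [restrictToLine, finSuccEquiv_X_zero]
  · simp [restrictToLine, finSuccEquiv_X_succ]

lemma mem_idealOfVars_iff {σ : Type*} {f : MvPolynomial σ R} :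
    f ∈ idealOfVars σ R ↔ constantCoeff f = 0 := by
  rw [← pow_one (idealOfVars σ R), mem_pow_idealOfVars_iff']
  simp [Finsupp.degree_eq_zero_iff, constantCoeff_eq]

lemma coeff_finSuccEquiv_mem_idealOfVars_pow {F : MvPolynomial (Fin (n + 1)) R} {m : ℕ}
    (hF : F ∈ pointIdeal (Matrix.vecCons 1 0) ^ m) (k : ℕ) :
    (finSuccEquiv R n F).coeff k ∈ idealOfVars (Fin n) R ^ m := by
  have hle : pointIdeal (Matrix.vecCons 1 0) ≤
      ((idealOfVars (Fin n) R).map Polynomial.C).comap (finSuccEquiv R n) := fun G hG ↦ by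
    rw [pointIdeal, RingHom.mem_ker, ← map_constantCoeff_finSuccEquiv] at hG
    rw [Ideal.mem_comap, Ideal.mem_map_C_iff]
    intro i
    rw [mem_idealOfVars_iff, ← Polynomial.coeff_map, hG, Polynomial.coeff_zero]
  have hmem := Ideal.le_comap_pow _ m (Ideal.pow_right_mono hle m hF)
  rw [← Ideal.map_pow] at hmem
  exact Ideal.mem_map_C_iff.mp hmem k

lemma le_of_isHomogeneous_of_mem_idealOfVars_pow {σ : Type*} {f : MvPolynomial σ R} {d m : ℕ}
    (hf : f.IsHomogeneous d) (hf0 : f ≠ 0) (hmem : f ∈ idealOfVars σ R ^ m) : m ≤ d := by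
  obtain ⟨s, hs⟩ := support_nonempty.mpr hf0
  have hdeg := hf.degree_eq_sum_deg_support hs
  rw [hdeg, ← Finsupp.degree_apply]
  exact (mem_pow_idealOfVars_iff m f).mp hmem s hs

end Expansion

section HomogeneousDivisors

variable {σ R : Type*} [CommRing R] [IsDomain R] {f g : MvPolynomial σ R} {d e : ℕ}

lemma le_of_isHomogeneous_of_dvd (hg : g.IsHomogeneous d) (hf : f.IsHomogeneous e) (hf0 : f ≠ 0)
    (hdvd : g ∣ f) : d ≤ e := by
  rw [← hg.totalDegree (ne_zero_of_dvd_ne_zero hf0 hdvd), ← hf.totalDegree hf0]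
  exact totalDegree_le_of_dvd_of_isDomain hdvd hf0

lemma mem_span_singleton_of_isHomogeneous_of_dvd (hg : g.IsHomogeneous d) (hf : f.IsHomogeneous d)
    (hdvd : g ∣ f) : f ∈ Submodule.span R {g} := by
  obtain rfl | hf0 := eq_or_ne f 0
  · exact zero_mem _
  obtain ⟨h, rfl⟩ := hdvd
  have hg0 : g ≠ 0 := left_ne_zero_of_mul hf0
  have hh : h.totalDegree = 0 := by
    have := totalDegree_mul_of_isDomain hg0 (right_ne_zero_of_mul hf0)
    rw [hg.totalDegree hg0, hf.totalDegree hf0] at this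
    lia
  rw [totalDegree_eq_zero_iff_eq_C.mp hh, mul_comm, ← smul_eq_C_mul]
  exact Submodule.smul_mem _ _ (Submodule.mem_span_singleton_self g)

end HomogeneousDivisors

section BinaryForms

variable {K : Type*} [Field K]

/-- The binary linear form `p 1 * X 0 - p 0 * X 1` vanishing at the point of the projective line
with coordinate vector `p`. -/
noncomputable def pointForm (p : Fin 2 → K) : MvPolynomial (Fin 2) K :=
  linearForm ![p 1, -p 0]

lemma pointForm_dvd_linearForm {p c : Fin 2 → K} (hp : p ≠ 0) (h : c ⬝ᵥ p = 0) :
    pointForm p ∣ linearForm c := by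
  suffices ∃ a : K, c = a • ![p 1, -p 0] by
    obtain ⟨a, rfl⟩ := this
    rw [map_smul, smul_eq_C_mul]
    exact dvd_mul_left _ _
  rw [dotProduct, Fin.sum_univ_two] at h
  by_cases hp0 : p 0 = 0
  · have hp1 : p 1 ≠ 0 := fun hp1 ↦ hp (funext (Fin.forall_fin_two.mpr ⟨hp0, hp1⟩))
    refine ⟨c 0 / p 1, funext (Fin.forall_fin_two.mpr ⟨by simp [hp1], ?_⟩)⟩
    simpa [hp0, hp1] using h
  · refine ⟨-c 1 / p 0, funext (Fin.forall_fin_two.mpr ⟨?_, by simp [hp0]⟩)⟩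
    simp only [Pi.smul_apply, Matrix.cons_val_zero, smul_eq_mul]
    field_simp
    linear_combination h

lemma pointForm_pow_dvd {p : Fin 2 → K} (hp : p ≠ 0) {f : MvPolynomial (Fin 2) K} {t : ℕ}
    (hf : f ∈ pointIdeal p ^ t) : pointForm p ^ t ∣ f := by
  have hle : pointIdeal p ≤ Ideal.span {pointForm p} :=
    pointIdeal_le_of_linearForm_mem hp fun c hc ↦
      Ideal.mem_span_singleton.mpr (pointForm_dvd_linearForm hp hc)
  rw [← Ideal.mem_span_singleton, ← Ideal.span_singleton_pow]
  exact Ideal.pow_right_mono hle t hf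

lemma isRelPrime_pointForm {p q : Fin 2 → K} (h : LinearIndependent K ![p, q]) :
    IsRelPrime (pointForm p) (pointForm q) := by
  refine isRelPrime_linearForm (LinearIndependent.pair_iff.mpr fun a b hab ↦ ?_)
  have h0 := congrFun hab 0
  have h1 := congrFun hab 1
  simp only [Pi.add_apply, Pi.smul_apply, Pi.zero_apply, Matrix.cons_val_zero, Matrix.cons_val_one,
    smul_eq_mul] at h0 h1
  refine LinearIndependent.pair_iff.mp h a b (funext (Fin.forall_fin_two.mpr ⟨?_, h0⟩))
  simp only [Pi.add_apply, Pi.smul_apply, Pi.zero_apply, smul_eq_mul]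
  linear_combination -h1

variable {ι : Type*} [Fintype ι]

lemma isHomogeneous_prod_pointForm_pow (y : ι → Fin 2 → K) (t : ℕ) :
    ((∏ i, pointForm (y i)) ^ t).IsHomogeneous (Fintype.card ι * t) :=
  (isHomogeneous_prod_linearForm _).pow t

lemma prod_pointForm_pow_dvd {y : ι → Fin 2 → K} (hy0 : ∀ i, y i ≠ 0)
    (hy : Pairwise fun i j ↦ LinearIndependent K ![y i, y j]) {f : MvPolynomial (Fin 2) K} {t : ℕ}
    (hf : ∀ i, f ∈ pointIdeal (y i) ^ t) : (∏ i, pointForm (y i)) ^ t ∣ f := by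
  rw [← Finset.prod_pow]
  exact Fintype.prod_dvd_of_isRelPrime (fun i j hij ↦ (isRelPrime_pointForm (hy hij)).pow)
    fun i ↦ pointForm_pow_dvd (hy0 i) (hf i)

end BinaryForms

section AdaptedForms

lemma isHomogeneous_coeff_finSuccEquiv {R : Type*} [CommRing R] {n d k : ℕ}
    {F : MvPolynomial (Fin (n + 1)) R} (hF : F.IsHomogeneous d)
    (hk : (finSuccEquiv R n F).coeff k ≠ 0) :
    k ≤ d ∧ ((finSuccEquiv R n F).coeff k).IsHomogeneous (d - k) := by
  have hkd : k ≤ d := by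
    have := totalDegree_coeff_finSuccEquiv_add_le F k hk
    have := hF.totalDegree_le
    lia
  exact ⟨hkd, hF.finSuccEquiv_coeff_isHomogeneous k (d - k) (by lia)⟩

variable {K ι : Type*} [Field K] [Fintype ι] {y : ι → Fin 2 → K} {F : MvPolynomial (Fin 3) K}
  {d m k s : ℕ}

lemma add_le_of_mem_pointIdeal_pow (hF : F.IsHomogeneous d)
    (hq : F ∈ pointIdeal (Matrix.vecCons 1 0) ^ m) (hk : (finSuccEquiv K 2 F).coeff k ≠ 0) :
    m + k ≤ d := by
  obtain ⟨hkd, hhom⟩ := isHomogeneous_coeff_finSuccEquiv hF hk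
  have := le_of_isHomogeneous_of_mem_idealOfVars_pow hhom hk
    (coeff_finSuccEquiv_mem_idealOfVars_pow hq k)
  lia

lemma card_mul_add_le_of_mem_pointIdeal_pow (hy0 : ∀ i, y i ≠ 0)
    (hy : Pairwise fun i j ↦ LinearIndependent K ![y i, y j]) (hF : F.IsHomogeneous d)
    (hp : ∀ i, F ∈ pointIdeal (Matrix.vecCons 0 (y i)) ^ m)
    (hk : (finSuccEquiv K 2 F).coeff k ≠ 0) :
    Fintype.card ι * (m - k) + k ≤ d := by
  obtain ⟨hkd, hhom⟩ := isHomogeneous_coeff_finSuccEquiv hF hk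
  have := le_of_isHomogeneous_of_dvd (isHomogeneous_prod_pointForm_pow y (m - k)) hhom hk
    (prod_pointForm_pow_dvd hy0 hy fun i ↦ coeff_finSuccEquiv_mem_pointIdeal_pow (hp i) k)
  lia

lemma eq_and_eq_of_mul_add_le {l : ℕ} (h₁ : l * s + k ≤ d) (h₂ : l * (l * s - k) + k ≤ d)
    (hd : d ≤ 2 * (l * s) - s) : d = 2 * (l * s) - s ∧ k = l * s - s := by
  obtain _ | l := l
  · lia
  simp only [add_mul, one_mul] at *
  have hk : k ≤ l * s := by lia
  obtain ⟨j, hj⟩ := Nat.exists_eq_add_of_le (show k ≤ l * s + s by lia)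
  rw [hj, Nat.add_sub_cancel_left] at h₂
  have hlj : l * j ≤ l * s := by lia
  obtain rfl | hl := Nat.eq_zero_or_pos l
  · lia
  · have := Nat.le_of_mul_le_mul_left hlj hl
    lia

/-- The form `X 0 ^ (m - s) * (∏ i, pointForm (y i)) ^ s` with `m = card ι * s`, where the binary
forms are taken in the variables `X 1` and `X 2`. It spans the nonzero component of least degree of
the fat point ideal of multiplicity `m` supported at `(1, 0, 0)` and the points `(0, y i)`. -/
noncomputable def adaptedInitialForm (y : ι → Fin 2 → K) (s : ℕ) : MvPolynomial (Fin 3) K :=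
  (finSuccEquiv K 2).symm
    (.monomial (Fintype.card ι * s - s) ((∏ i, pointForm (y i)) ^ s))

lemma eq_of_coeff_finSuccEquiv_ne_zero (hy0 : ∀ i, y i ≠ 0)
    (hy : Pairwise fun i j ↦ LinearIndependent K ![y i, y j]) (hF : F.IsHomogeneous d)
    (hd : d ≤ 2 * (Fintype.card ι * s) - s)
    (hq : F ∈ pointIdeal (Matrix.vecCons 1 0) ^ (Fintype.card ι * s))
    (hp : ∀ i, F ∈ pointIdeal (Matrix.vecCons 0 (y i)) ^ (Fintype.card ι * s))
    (hk : (finSuccEquiv K 2 F).coeff k ≠ 0) :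
    d = 2 * (Fintype.card ι * s) - s ∧ k = Fintype.card ι * s - s :=
  eq_and_eq_of_mul_add_le (add_le_of_mem_pointIdeal_pow hF hq hk)
    (card_mul_add_le_of_mem_pointIdeal_pow hy0 hy hF hp hk) hd

lemma coeff_finSuccEquiv_mem_span_prod_pointForm_pow [Nonempty ι] (hy0 : ∀ i, y i ≠ 0)
    (hy : Pairwise fun i j ↦ LinearIndependent K ![y i, y j])
    (hF : F.IsHomogeneous (2 * (Fintype.card ι * s) - s))
    (hp : ∀ i, F ∈ pointIdeal (Matrix.vecCons 0 (y i)) ^ (Fintype.card ι * s)) :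
    (finSuccEquiv K 2 F).coeff (Fintype.card ι * s - s) ∈
      Submodule.span K {(∏ i, pointForm (y i)) ^ s} := by
  have hs : s ≤ Fintype.card ι * s := Nat.le_mul_of_pos_left s Fintype.card_pos
  have hdvd := prod_pointForm_pow_dvd hy0 hy fun i ↦
    coeff_finSuccEquiv_mem_pointIdeal_pow (hp i) (Fintype.card ι * s - s)
  rw [Nat.sub_sub_self hs] at hdvd
  exact mem_span_singleton_of_isHomogeneous_of_dvd (isHomogeneous_prod_pointForm_pow y s)
    (hF.finSuccEquiv_coeff_isHomogeneous _ _ (by lia)) hdvd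

lemma eq_and_mem_span_adaptedInitialForm [Nonempty ι] (hy0 : ∀ i, y i ≠ 0)
    (hy : Pairwise fun i j ↦ LinearIndependent K ![y i, y j]) (hF0 : F ≠ 0)
    (hF : F.IsHomogeneous d) (hd : d ≤ 2 * (Fintype.card ι * s) - s)
    (hq : F ∈ pointIdeal (Matrix.vecCons 1 0) ^ (Fintype.card ι * s))
    (hp : ∀ i, F ∈ pointIdeal (Matrix.vecCons 0 (y i)) ^ (Fintype.card ι * s)) :
    d = 2 * (Fintype.card ι * s) - s ∧ F ∈ Submodule.span K {adaptedInitialForm y s} := by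
  have hcoeff (k : ℕ) := eq_of_coeff_finSuccEquiv_ne_zero (k := k) hy0 hy hF hd hq hp
  have hne : finSuccEquiv K 2 F ≠ 0 := (map_ne_zero_iff _ (finSuccEquiv K 2).injective).mpr hF0
  obtain ⟨rfl, -⟩ := hcoeff _ (Polynomial.leadingCoeff_ne_zero.mpr hne)
  obtain ⟨c, hc⟩ := Submodule.mem_span_singleton.mp
    (coeff_finSuccEquiv_mem_span_prod_pointForm_pow hy0 hy hF hp)
  refine ⟨rfl, Submodule.mem_span_singleton.mpr ⟨c, (finSuccEquiv K 2).injective ?_⟩⟩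
  rw [map_smul, adaptedInitialForm, AlgEquiv.apply_symm_apply]
  ext1 k
  rw [Polynomial.coeff_smul, Polynomial.coeff_monomial]
  split_ifs with h
  · rw [hc, h]
  · rw [smul_zero, eq_comm]
    exact of_not_not fun hk ↦ h (hcoeff k hk).2.symm

end AdaptedForms

section NearlyCollinearPoints

open scoped Matrix

/-- The product of the `(l * s - s)`-th power of the line `L` and the `s`-th powers of the `l` lines
joining the point `p (Fin.last l)` to the other points: the form of least degree in the fat point
ideal of multiplicity `l * s`. -/
noncomputable def initialForm {K : Type*} [Field K] {l : ℕ} (p : Fin (l + 1) → Fin 3 → K)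
    (L : Fin 3 → K) (s : ℕ) : MvPolynomial (Fin 3) K :=
  linearForm L ^ (l * s - s) *
    (∏ i : Fin l, linearForm (p (Fin.last l) ⨯₃ p i.castSucc)) ^ s

variable {K : Type*} [Field K] {l : ℕ} {p : Fin (l + 1) → Fin 3 → K} {L : Fin 3 → K}

lemma exists_eq_and_mem_span_of_mem_fatPointIdeal (hl : 0 < l)
    (hp : Pairwise fun i j ↦ LinearIndependent K ![p i, p j])
    (hon : ∀ i : Fin l, L ⬝ᵥ p i.castSucc = 0) (hoff : L ⬝ᵥ p (Fin.last l) ≠ 0) (s : ℕ) :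
    ∃ F₀ : MvPolynomial (Fin 3) K, ∀ d ≤ 2 * (l * s) - s, ∀ F : MvPolynomial (Fin 3) K,
      F ≠ 0 → F.IsHomogeneous d → F ∈ fatPointIdeal p (l * s) →
        d = 2 * (l * s) - s ∧ F ∈ Submodule.span K {F₀} := by
  obtain ⟨M, hMq, hML⟩ := exists_GL_mulVec_vecCons_eq hoff
  choose y hy using fun i ↦ hML _ (hon i)
  let T : (Fin 2 → K) →ₗ[K] Fin 3 → K := M.1.mulVecLin ∘ₗ LinearMap.vecCons 0 .id
  have hT (i : Fin l) : T (y i) = p i.castSucc := hy i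
  have hy0 (i : Fin l) : y i ≠ 0 := fun h ↦
    (hp (Fin.castSucc_lt_last i).ne).ne_zero 0 (by simp [← hT, h])
  have hyp : Pairwise fun i j ↦ LinearIndependent K ![y i, y j] := fun i j hij ↦
    LinearIndependent.pair_iff.mpr fun a b hab ↦
      LinearIndependent.pair_iff.mp (hp fun h ↦ hij (Fin.castSucc_injective l h)) a b
        (by simpa [hT] using congrArg T hab)
  have : Nonempty (Fin l) := Fin.pos_iff_nonempty.mp hl
  refine ⟨(changeOfVariables M).symm (adaptedInitialForm y s), fun d hd F hF0 hF hmem ↦ ?_⟩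
  rw [fatPointIdeal, Ideal.mem_iInf] at hmem
  obtain ⟨hdeg, hspan⟩ := eq_and_mem_span_adaptedInitialForm (s := s) hy0 hyp
    ((map_ne_zero_iff _ (changeOfVariables M).injective).mpr hF0)
    (isHomogeneous_changeOfVariables M hF) (by simpa using hd)
    (changeOfVariables_mem_pointIdeal_pow M (by simpa [hMq] using hmem (Fin.last l)))
    fun i ↦ changeOfVariables_mem_pointIdeal_pow M (by simpa [hy] using hmem i.castSucc)
  rw [Fintype.card_fin] at hdeg
  obtain ⟨c, hc⟩ := Submodule.mem_span_singleton.mp hspan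
  refine ⟨hdeg, Submodule.mem_span_singleton.mpr ⟨c, ?_⟩⟩
  rw [← map_smul, hc, AlgEquiv.symm_apply_apply]

variable {s : ℕ}

lemma initialForm_ne_zero (hp : Pairwise fun i j ↦ LinearIndependent K ![p i, p j]) (hL : L ≠ 0) :
    initialForm p L s ≠ 0 := by
  refine mul_ne_zero (pow_ne_zero _ (linearForm_ne_zero hL))
    (pow_ne_zero _ (Finset.prod_ne_zero_iff.mpr fun i _ ↦ linearForm_ne_zero ?_))
  exact crossProduct_ne_zero_iff_linearIndependent.mpr (hp (Fin.castSucc_lt_last i).ne')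

lemma isHomogeneous_initialForm (hl : 0 < l) :
    (initialForm p L s).IsHomogeneous (2 * (l * s) - s) := by
  have hs : s ≤ l * s := Nat.le_mul_of_pos_left s hl
  have hlines :=
    isHomogeneous_prod_linearForm fun i : Fin l ↦ p (Fin.last l) ⨯₃ p i.castSucc
  rw [Fintype.card_fin] at hlines
  have h := ((isHomogeneous_linearForm L).pow (l * s - s)).mul (hlines.pow s)
  rwa [show 1 * (l * s - s) + l * s = 2 * (l * s) - s by lia] at h

lemma initialForm_mem_fatPointIdeal (hl : 0 < l) (hon : ∀ i : Fin l, L ⬝ᵥ p i.castSucc = 0) :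
    initialForm p L s ∈ fatPointIdeal p (l * s) := by
  refine Ideal.mem_iInf.mpr (Fin.forall_fin_succ'.mpr ⟨fun i ↦ ?_, ?_⟩)
  · have hL : linearForm L ∈ pointIdeal (p i.castSucc) := linearForm_mem_pointIdeal (hon i)
    have hlines : ∏ i : Fin l, linearForm (p (Fin.last l) ⨯₃ p i.castSucc) ∈
        pointIdeal (p i.castSucc) :=
      Ideal.prod_mem _ (Finset.mem_univ i) (linearForm_mem_pointIdeal
        ((dotProduct_comm _ _).trans (dot_cross_self _ _)))
    have hs : s ≤ l * s := Nat.le_mul_of_pos_left s hl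
    rw [← Nat.sub_add_cancel hs, pow_add]
    exact Ideal.mul_mem_mul (Ideal.pow_mem_pow hL _) (Ideal.pow_mem_pow hlines s)
  · have hlines : ∏ i : Fin l, linearForm (p (Fin.last l) ⨯₃ p i.castSucc) ∈
        pointIdeal (p (Fin.last l)) ^ l := by
      simpa using Ideal.prod_mem_prod (s := Finset.univ)
        (I := fun _ : Fin l ↦ pointIdeal (p (Fin.last l)))
        fun i _ ↦ linearForm_mem_pointIdeal ((dotProduct_comm _ _).trans (dot_self_cross _ _))
    rw [pow_mul]
    exact Ideal.mul_mem_left _ _ (Ideal.pow_mem_pow hlines s)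

lemma degComp_fatPointIdeal_eq_bot (hl : 0 < l)
    (hp : Pairwise fun i j ↦ LinearIndependent K ![p i, p j])
    (hon : ∀ i : Fin l, L ⬝ᵥ p i.castSucc = 0) (hoff : L ⬝ᵥ p (Fin.last l) ≠ 0) {d : ℕ}
    (hd : d < 2 * (l * s) - s) : degComp (fatPointIdeal p (l * s)) d = ⊥ := by
  obtain ⟨F₀, hF₀⟩ := exists_eq_and_mem_span_of_mem_fatPointIdeal hl hp hon hoff s
  rw [Submodule.eq_bot_iff]
  rintro F ⟨hmem, hF⟩
  by_contra hF0
  exact hd.ne (hF₀ d hd.le F hF0 hF hmem).1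

lemma finrank_degComp_fatPointIdeal (hl : 0 < l)
    (hp : Pairwise fun i j ↦ LinearIndependent K ![p i, p j])
    (hon : ∀ i : Fin l, L ⬝ᵥ p i.castSucc = 0) (hoff : L ⬝ᵥ p (Fin.last l) ≠ 0) :
    Module.finrank K (degComp (fatPointIdeal p (l * s)) (2 * (l * s) - s)) = 1 := by
  obtain ⟨F₀, hF₀⟩ := exists_eq_and_mem_span_of_mem_fatPointIdeal hl hp hon hoff s
  have hL : L ≠ 0 := by
    rintro rfl
    exact hoff (zero_dotProduct _)
  have hne : initialForm p L s ≠ 0 := initialForm_ne_zero hp hL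
  have hmem : initialForm p L s ∈ degComp (fatPointIdeal p (l * s)) (2 * (l * s) - s) :=
    ⟨initialForm_mem_fatPointIdeal hl hon, isHomogeneous_initialForm hl⟩
  have hle : degComp (fatPointIdeal p (l * s)) (2 * (l * s) - s) ≤ Submodule.span K {F₀} := by
    rintro F ⟨hF, hhom⟩
    obtain rfl | hF0 := eq_or_ne F 0
    · exact zero_mem _
    · exact (hF₀ _ le_rfl F hF0 hhom hF).2
  have hF₀_ne : F₀ ≠ 0 := by
    rintro rfl
    exact hne (by simpa using hle hmem)
  have hspan := ((nonzero_span_atom F₀ hF₀_ne).le_iff.mp hle).resolve_left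
    ((Submodule.ne_bot_iff _).mpr ⟨_, hmem, hne⟩)
  rw [hspan, finrank_span_singleton hF₀_ne]

end NearlyCollinearPoints

theorem stmt_6_general {K : Type*} [Field K] {l m : ℕ} (p : Fin (l + 1) → Fin 3 → K)
    (hp : Pairwise fun i j ↦ LinearIndependent K ![p i, p j]) (L : Fin 3 → K)
    (hon : ∀ i : Fin l, L ⬝ᵥ p i.castSucc = 0) (hoff : L ⬝ᵥ p (Fin.last l) ≠ 0)
    (hm : 1 ≤ m) (hdvd : l ∣ m) :
    vnum (fatPointIdeal p m) (2 * m - m / l) = 1 ∧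
      ∀ d < 2 * m - m / l, vnum (fatPointIdeal p m) d = 0 := by
  obtain ⟨s, rfl⟩ := hdvd
  have hl : 0 < l := Nat.pos_of_mul_pos_right hm
  rw [Nat.mul_div_cancel_left s hl]
  have hbot {d : ℕ} (hd : d < 2 * (l * s) - s) : degComp (fatPointIdeal p (l * s)) d = ⊥ :=
    degComp_fatPointIdeal_eq_bot hl hp hon hoff hd
  have hs : s ≤ l * s := Nat.le_mul_of_pos_left s hl
  refine ⟨?_, fun d hd ↦ vnum_eq_zero_of_degComp_eq_bot (hbot hd)⟩
  rw [vnum_eq_finrank_degComp (hbot (by lia))]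
  exact finrank_degComp_fatPointIdeal hl hp hon hoff

theorem stmt_6
    (K : Type*) [Field K] [CharZero K]
    -- `l > 2` points on a line plus one point off the line
    (l : ℕ) (hl : 2 < l)
    (p : Fin (l + 1) → Fin 3 → K) (hp0 : ∀ i, p i ≠ 0)
    (hdist : ∀ i j, i ≠ j → ∀ c : K, c • p i ≠ p j)
    (L : Fin 3 → K) (hL : L ≠ 0)
    (hon : ∀ i : Fin (l + 1), (i : ℕ) < l → ∑ j, L j * p i j = 0)
    (hoff : ∑ j, L j * p (Fin.last l) j ≠ 0)
    -- `P i` is the homogeneous prime ideal of all forms vanishing at `p i`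
    (P : Fin (l + 1) → Ideal (MvPolynomial (Fin 3) K))
    (hP : ∀ i F, F ∈ P i ↔ ∀ n, eval (p i) (homogeneousComponent n F) = 0)
    -- the uniform fat point ideal `I^{(m)} = P_1^m ∩ ⋯ ∩ P_{l+1}^m`
    (m : ℕ) (hm : 1 ≤ m) (hdvd : l * (l - 1) ∣ m)
    (Im : Ideal (MvPolynomial (Fin 3) K)) (hIm : Im = ⨅ i, P i ^ m) :
    vnum Im (2 * m - m / l) = 1 ∧
    ∀ d : ℕ, d < 2 * m - m / l → vnum Im d = 0 := by
  have hdistinct : Pairwise fun i j ↦ LinearIndependent K ![p i, p j] := fun i j hij ↦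
    (LinearIndependent.pair_iff' (hp0 i)).mpr (hdist i j hij)
  have hfat : Im = fatPointIdeal p m := by
    simp_rw [hIm, fatPointIdeal, show P = fun i ↦ pointIdeal (p i) from
      funext fun i ↦ Ideal.ext fun F ↦ (hP i F).trans mem_pointIdeal_iff.symm]
  rw [hfat]
  exact stmt_6_general p hdistinct L (fun i ↦ hon _ i.isLt) hoff hm (dvd_of_mul_right_dvd hdvd)
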